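/- arXiv:2303.16174 — 6 statements merged into one kernel-verified Lean document; each statement's English description precedes it below -/
import Mathlib

section
/- For all real numbers ℓ₁, ℓ₂ > 0, the space M(ℓ₁, ℓ₂) is metrizable and Δ-generated; in particular the compact-open topology on M(ℓ₁, ℓ₂) coincides with its Δ-kelleyfication. -/
/-- `M ℓ ℓ'` : the space of continuous nondecreasing surjective maps `[0,ℓ] → [0,ℓ']`,
topologized as a subspace of the space of continuous maps with the compact-open topology. -/
def MSp (ℓ ℓ' : ℝ) : Type :=
  {f : C(Set.Icc (0:ℝ) ℓ, Set.Icc (0:ℝ) ℓ') // Monotone f ∧ Function.Surjective f}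

instance (ℓ ℓ' : ℝ) : TopologicalSpace (MSp ℓ ℓ') :=
  inferInstanceAs (TopologicalSpace {f : C(Set.Icc (0:ℝ) ℓ, Set.Icc (0:ℝ) ℓ') //
    Monotone f ∧ Function.Surjective f})

open Topology Filter

def bmp (n : ℕ) (t : ℝ) : ℝ := max 0 (1 - 4 * |2 ^ n * t - 1|)

lemma bmp_cont (n : ℕ) : Continuous (bmp n) := by unfold bmp; fun_prop

lemma bmp_nonneg (n : ℕ) (t : ℝ) : 0 ≤ bmp n t := le_max_left _ _

lemma bmp_le (n : ℕ) (t : ℝ) : bmp n t ≤ 1 := by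
  unfold bmp
  have := abs_nonneg (2 ^ n * t - 1)
  exact max_le (by norm_num) (by linarith)

lemma bmp_zero (n : ℕ) : bmp n 0 = 0 := by unfold bmp; norm_num

lemma bmp_self (n : ℕ) : bmp n ((1/2) ^ n) = 1 := by
  unfold bmp; rw [← mul_pow]; norm_num

lemma bmp_ne {n : ℕ} {t : ℝ} (h : bmp n t ≠ 0) : 3/4 < 2 ^ n * t ∧ 2 ^ n * t < 5/4 := by
  have h1 : 0 < 1 - 4 * |2 ^ n * t - 1| := by
    by_contra h'
    exact h (max_eq_left (not_lt.mp h'))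
  have h2 : |2 ^ n * t - 1| < 1/4 := by linarith
  rw [abs_lt] at h2
  constructor <;> linarith [h2.1, h2.2]

lemma bmp_disj_lt {n m : ℕ} {t : ℝ} (hnm : n < m) (hn : bmp n t ≠ 0) : bmp m t = 0 := by
  by_contra hm
  have h1 := bmp_ne hn
  have h2 := bmp_ne hm
  obtain ⟨k, rfl⟩ := Nat.exists_eq_add_of_lt hnm
  have h3 : (1:ℝ) ≤ 2 ^ k := one_le_pow₀ (by norm_num)
  have h4 : (2:ℝ) ^ (n + k + 1) * t = 2 * (2 ^ k * (2 ^ n * t)) := by ring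
  rw [h4] at h2
  nlinarith [h1.1, h2.2]

lemma bmp_disj {n m : ℕ} {t : ℝ} (hnm : m ≠ n) (hn : bmp n t ≠ 0) : bmp m t = 0 := by
  rcases lt_or_gt_of_ne hnm with h | h
  · by_contra hm
    exact hn (bmp_disj_lt h hm)
  · exact bmp_disj_lt h hn

lemma exists_path {E : Type*} [NormedAddCommGroup E] [NormedSpace ℝ E] [CompleteSpace E]
    {S : Set E} (hS : Convex ℝ S) (x : E) (hx : x ∈ S) (u : ℕ → E) (hu : ∀ n, u n ∈ S)
    (hd : ∀ n, dist (u n) x < (1/2) ^ n) :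
    ∃ γ : ℝ → E, Continuous γ ∧ (∀ t, γ t ∈ S) ∧ γ 0 = x ∧ ∀ n, γ ((1/2) ^ n) = u n := by
  have key : ∀ n t, bmp n t ≠ 0 →
      x + ∑' k, bmp k t • (u k - x) = x + bmp n t • (u n - x) := by
    intro n t h
    rw [tsum_eq_single n]
    intro m hm
    rw [bmp_disj hm h, zero_smul]
  refine ⟨fun t => x + ∑' n, bmp n t • (u n - x), ?_, ?_, ?_, ?_⟩
  · refine continuous_const.add (continuous_tsum (u := fun n => (1/2 : ℝ) ^ n) ?_ ?_ ?_)
    · intro n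
      exact (bmp_cont n).smul continuous_const
    · exact summable_geometric_two
    · intro n t
      rw [norm_smul, ← dist_eq_norm, Real.norm_of_nonneg (bmp_nonneg n t)]
      have := hd n
      have := bmp_le n t
      have := bmp_nonneg n t
      have : 0 ≤ dist (u n) x := dist_nonneg
      nlinarith
  · intro t
    by_cases h : ∃ n, bmp n t ≠ 0
    · obtain ⟨n, hn⟩ := h
      have := key n t hn
      simp only [this]
      exact hS.add_smul_sub_mem hx (hu n) ⟨bmp_nonneg n t, bmp_le n t⟩
    · push Not at h
      simpa [h] using hx
  · simp [bmp_zero]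
  · intro n
    have h1 := bmp_self n
    have := key n _ (by rw [h1]; exact one_ne_zero)
    simp only [this, h1]
    simp

lemma isOpen_of_paths {X E : Type*} [TopologicalSpace X] [NormedAddCommGroup E] [NormedSpace ℝ E]
    [CompleteSpace E] (e : X → E) (he : IsEmbedding e) (hc : Convex ℝ (Set.range e))
    (U : Set X) (hU : ∀ γ : ℝ → X, Continuous γ → IsOpen (γ ⁻¹' U)) : IsOpen U := by
  rw [isOpen_iff_mem_nhds]
  intro x hx
  by_contra hn
  have h1 : ∀ n : ℕ, ∃ y, y ∉ U ∧ dist (e y) (e x) < (1/2) ^ n := by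
    intro n
    by_contra! h
    apply hn
    rw [he.nhds_eq_comap]
    refine ⟨Metric.ball (e x) ((1/2)^n), Metric.ball_mem_nhds _ (by positivity), ?_⟩
    intro y hy
    by_contra hyU
    exact absurd hy (not_lt.mpr (h y hyU))
  choose y hyU hyd using h1
  obtain ⟨γ, hγ, hγS, h0, hγn⟩ := exists_path hc (e x) ⟨x, rfl⟩ (fun n => e (y n))
    (fun n => ⟨_, rfl⟩) hyd
  choose g hg using hγS
  have hgc : Continuous g := by
    rw [he.continuous_iff]
    convert hγ using 1
    ext1 t
    exact hg t
  have hg0 : g 0 = x := he.injective (by rw [hg, h0])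
  have hgn : ∀ n, g ((1/2)^n) = y n := fun n => he.injective (by rw [hg, hγn])
  have h2 : g ⁻¹' U ∈ 𝓝 (0:ℝ) := (hU g hgc).mem_nhds (by simpa [hg0] using hx)
  have h3 := (tendsto_pow_atTop_nhds_zero_of_lt_one (r := (1/2:ℝ)) (by norm_num)
    (by norm_num)).eventually h2
  obtain ⟨n, hn⟩ := h3.exists
  apply hyU n
  rw [← hgn]
  exact hn

def MSp.emb (a b : ℝ) (f : MSp a b) : C(Set.Icc (0:ℝ) a, ℝ) :=
  (⟨Subtype.val, continuous_subtype_val⟩ : C(Set.Icc (0:ℝ) b, ℝ)).comp f.1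

lemma MSp.emb_isEmbedding (a b : ℝ) : IsEmbedding (MSp.emb a b) := by
  have h1 : IsEmbedding (fun f : MSp a b => f.1) := IsEmbedding.subtypeVal
  have h2 := ContinuousMap.isEmbedding_postcomp (X := Set.Icc (0:ℝ) a)
    (⟨Subtype.val, continuous_subtype_val⟩ : C(Set.Icc (0:ℝ) b, ℝ)) IsEmbedding.subtypeVal
  exact h2.comp h1

lemma MSp.range_emb (a b : ℝ) (ha : 0 < a) (hb : 0 < b) : Set.range (MSp.emb a b) =
    {g : C(Set.Icc (0:ℝ) a, ℝ) | Monotone g ∧ g ⟨0, le_rfl, ha.le⟩ = 0 ∧ g ⟨a, ha.le, le_rfl⟩ = b} := by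
  ext g
  constructor
  · rintro ⟨f, rfl⟩
    have hm := f.2.1
    have hs := f.2.2
    refine ⟨fun x y h => hm h, ?_, ?_⟩
    · obtain ⟨z, hz⟩ := hs ⟨0, le_rfl, hb.le⟩
      have h1 : f.1 ⟨0, le_rfl, ha.le⟩ ≤ f.1 z := hm z.2.1
      rw [hz] at h1
      exact le_antisymm h1 (f.1 ⟨0, le_rfl, ha.le⟩).2.1
    · obtain ⟨z, hz⟩ := hs ⟨b, hb.le, le_rfl⟩
      have h1 : f.1 z ≤ f.1 ⟨a, ha.le, le_rfl⟩ := hm z.2.2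
      rw [hz] at h1
      exact le_antisymm (f.1 ⟨a, ha.le, le_rfl⟩).2.2 h1
  · rintro ⟨hm, h0, h1⟩
    have hr : ∀ x, g x ∈ Set.Icc 0 b := by
      intro x
      constructor
      · exact h0.symm.trans_le (hm x.2.1)
      · exact (hm x.2.2).trans_eq h1
    refine ⟨⟨⟨fun x => ⟨g x, hr x⟩, by fun_prop⟩, fun x y h => hm h, ?_⟩, ?_⟩
    · rintro ⟨z, hz⟩
      haveI : PreconnectedSpace (Set.Icc (0:ℝ) a) :=
        Subtype.preconnectedSpace isPreconnected_Icc
      obtain ⟨w, hw⟩ := mem_range_of_exists_le_of_exists_ge g.continuous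
        ⟨_, h0.trans_le hz.1⟩ ⟨_, hz.2.trans_eq h1.symm⟩
      exact ⟨w, Subtype.ext hw⟩
    · ext x; rfl

lemma MSp.convex (a b : ℝ) (ha : 0 < a) (hb : 0 < b) : Convex ℝ (Set.range (MSp.emb a b)) := by
  rw [MSp.range_emb a b ha hb]
  rintro f ⟨hf, hf0, hf1⟩ g ⟨hg, hg0, hg1⟩ s t hs ht hst
  refine ⟨fun x y h => ?_, ?_, ?_⟩
  · have := hf h
    have := hg h
    simp only [ContinuousMap.add_apply, ContinuousMap.smul_apply, smul_eq_mul]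
    gcongr
  · simp [hf0, hg0]
  · simp [hf1, hg1, ← add_mul, hst]

lemma MSp.open_of {a b : ℝ} (ha : 0 < a) (hb : 0 < b) (U : Set (MSp a b))
    (hU : ∀ (n : ℕ) (f : C(Fin n → ℝ, MSp a b)), IsOpen (f ⁻¹' U)) : IsOpen U := by
  refine isOpen_of_paths _ (MSp.emb_isEmbedding a b) (MSp.convex a b ha hb) U fun γ hγ => ?_
  have := hU 1 ⟨fun v => γ (v 0), by fun_prop⟩
  exact this.preimage (f := fun t : ℝ => (fun _ => t : Fin 1 → ℝ)) (by fun_prop)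

/-- For all `ℓ₁, ℓ₂ > 0`, the space `M(ℓ₁, ℓ₂)` is metrizable and Δ-generated; in particular
its (compact-open) topology coincides with its Δ-kelleyfication. -/
theorem stmt1 (ℓ₁ ℓ₂ : ℝ) (hℓ₁ : 0 < ℓ₁) (hℓ₂ : 0 < ℓ₂) :
    TopologicalSpace.MetrizableSpace (MSp ℓ₁ ℓ₂) ∧ DeltaGeneratedSpace (MSp ℓ₁ ℓ₂) ∧
      (inferInstance : TopologicalSpace (MSp ℓ₁ ℓ₂)) =
        TopologicalSpace.deltaGenerated (MSp ℓ₁ ℓ₂) := by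
  refine ⟨(MSp.emb_isEmbedding ℓ₁ ℓ₂).metrizableSpace, ?_, ?_⟩
  · rw [DeltaGeneratedSpace, IsGeneratedBy.iff_le_generatedBy]
    intro U hU
    refine MSp.open_of hℓ₁ hℓ₂ U fun n f => ?_
    exact isOpen_iSup_iff.mp (isOpen_iSup_iff.mp hU n) f
  · refine le_antisymm ?_ (iSup_le fun f => f.2.continuous.coinduced_le)
    intro U hU
    refine MSp.open_of hℓ₁ hℓ₂ U fun n f => ?_
    exact (isOpen_iSup_iff.mp hU) ⟨n, f⟩
end

section
/- Let ℓ, ℓ' > 0, let φ ∈ M(ℓ, ℓ'), let n ≥ 1, and let ℓ'₁, …, ℓ'_n > 0 with ℓ'₁ + ⋯ + ℓ'_n = ℓ'. Then there exist real numbers ℓ₁, …, ℓ_n > 0 with ℓ₁ + ⋯ + ℓ_n = ℓ and maps φ_i ∈ M(ℓ_i, ℓ'_i) for 1 ≤ i ≤ n such that φ = φ₁ ⊗ ⋯ ⊗ φ_n. Moreover, if φ is injective (i.e., φ is a nondecreasing homeomorphism), then the numbers ℓ_i and the maps φ_i are uniquely determined, and each φ_i is a nondecreasing homeomorphism. -/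
open Set

/-- `IsMFun ℓ ℓ' f` : the function `f : ℝ → ℝ`, viewed as a map `[0,ℓ] → [0,ℓ']`, is an
element of `M(ℓ, ℓ')`, i.e. it is continuous, nondecreasing and surjective on `[0, ℓ]`
with image `[0, ℓ']`. -/
def IsMFun (ℓ ℓ' : ℝ) (f : ℝ → ℝ) : Prop :=
  ContinuousOn f (Icc 0 ℓ) ∧ MonotoneOn f (Icc 0 ℓ) ∧ f '' Icc 0 ℓ = Icc 0 ℓ'

/-- Partial sums `ℓs 0 + ⋯ + ℓs (k-1)` of a finite list of lengths. -/
def psum {n : ℕ} (ℓs : Fin n → ℝ) (k : ℕ) : ℝ :=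
  ∑ j ∈ Finset.range k, if h : j < n then ℓs ⟨j, h⟩ else 0

/-- `IsTensorDecomp φ ℓs ℓ's φs` : `φ = φs 0 ⊗ ⋯ ⊗ φs (n-1)` as maps
`[0, ℓs 0 + ⋯ + ℓs (n-1)] → [0, ℓ's 0 + ⋯ + ℓ's (n-1)]`, i.e. on each subinterval
`[ℓs 0 + ⋯ + ℓs (i-1), ℓs 0 + ⋯ + ℓs i]` the map `φ` is given by the correspondingly
translated copy of `φs i`. -/
def IsTensorDecomp {n : ℕ} (φ : ℝ → ℝ) (ℓs ℓ's : Fin n → ℝ) (φs : Fin n → ℝ → ℝ) : Prop :=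
  ∀ i : Fin n, ∀ t ∈ Icc (psum ℓs i) (psum ℓs (i + 1)),
    φ t = φs i (t - psum ℓs i) + psum ℓ's i

theorem psum_succ_aux {n : ℕ} (a : Fin n → ℝ) (i : Fin n) :
    psum a (i + 1) = psum a i + a i := by
  unfold psum
  rw [Finset.sum_range_succ]
  simp

theorem psum_zero_aux {n : ℕ} (a : Fin n → ℝ) : psum a 0 = 0 := by
  simp [psum]

theorem psum_full_aux {n : ℕ} (a : Fin n → ℝ) : psum a n = ∑ i, a i := by
  unfold psum
  rw [Finset.sum_range]
  simp

theorem psum_mono_aux {n : ℕ} (a : Fin n → ℝ) (h : ∀ i, 0 < a i) : Monotone (psum a) := by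
  apply monotone_nat_of_le_succ
  intro k
  unfold psum
  rw [Finset.sum_range_succ]
  split_ifs with hk
  · linarith [h ⟨k, hk⟩]
  · simp

theorem mfun_zero {ℓ ℓ' : ℝ} {f : ℝ → ℝ} (hℓ : 0 < ℓ) (hℓ' : 0 < ℓ') (h : IsMFun ℓ ℓ' f) :
    f 0 = 0 := by
  obtain ⟨_, hm, hi⟩ := h
  have h0 : (0:ℝ) ∈ Icc 0 ℓ := ⟨le_rfl, hℓ.le⟩
  have h1 : f 0 ∈ Icc 0 ℓ' := hi ▸ mem_image_of_mem f h0
  have h2 : (0:ℝ) ∈ f '' Icc 0 ℓ := by rw [hi]; exact ⟨le_rfl, hℓ'.le⟩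
  obtain ⟨x, hx, hx2⟩ := h2
  have := hm h0 hx hx.1
  linarith [h1.1]

theorem mfun_end {ℓ ℓ' : ℝ} {f : ℝ → ℝ} (hℓ : 0 < ℓ) (hℓ' : 0 < ℓ') (h : IsMFun ℓ ℓ' f) :
    f ℓ = ℓ' := by
  obtain ⟨_, hm, hi⟩ := h
  have h0 : ℓ ∈ Icc 0 ℓ := ⟨hℓ.le, le_rfl⟩
  have h1 : f ℓ ∈ Icc 0 ℓ' := hi ▸ mem_image_of_mem f h0
  have h2 : ℓ' ∈ f '' Icc 0 ℓ := by rw [hi]; exact ⟨hℓ'.le, le_rfl⟩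
  obtain ⟨x, hx, hx2⟩ := h2
  have := hm hx h0 hx.2
  linarith [h1.2]

/-- The value of the big map at the division points. -/
theorem decomp_point {ℓ ℓ' : ℝ} (hℓ : 0 < ℓ) (hℓ' : 0 < ℓ')
    {φ : ℝ → ℝ} (hφ : IsMFun ℓ ℓ' φ) {n : ℕ} {ℓ's : Fin n → ℝ} (hpos : ∀ i, 0 < ℓ's i)
    (hsum : (∑ i, ℓ's i) = ℓ') {ℓs : Fin n → ℝ} {φs : Fin n → ℝ → ℝ}
    (h1 : ∀ i, 0 < ℓs i) (h2 : (∑ i, ℓs i) = ℓ) (h3 : ∀ i, IsMFun (ℓs i) (ℓ's i) (φs i))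
    (h4 : IsTensorDecomp φ ℓs ℓ's φs) (k : ℕ) (hk : k ≤ n) :
    psum ℓs k ∈ Icc 0 ℓ ∧ φ (psum ℓs k) = psum ℓ's k := by
  have hm := psum_mono_aux ℓs h1
  refine ⟨⟨?_, ?_⟩, ?_⟩
  · rw [← psum_zero_aux ℓs]; exact hm (Nat.zero_le k)
  · rw [← h2, ← psum_full_aux]; exact hm hk
  · rcases hk.lt_or_eq with hk | rfl
    · have := h4 ⟨k, hk⟩ (psum ℓs k) ⟨le_rfl, hm (Nat.le_succ k)⟩
      rw [this]
      simp [mfun_zero (h1 _) (hpos _) (h3 ⟨k, hk⟩)]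
    · rw [psum_full_aux, psum_full_aux, h2, hsum]
      exact mfun_end hℓ hℓ' hφ

/-- Any `φ ∈ M(ℓ, ℓ')` decomposes as a tensor product `φ = φ₁ ⊗ ⋯ ⊗ φ_n` along any
decomposition `ℓ' = ℓ'₁ + ⋯ + ℓ'_n` of the target length into `n ≥ 1` positive lengths;
moreover, if `φ` is injective (i.e. a nondecreasing homeomorphism), then the lengths `ℓᵢ`
and the maps `φᵢ` (on their intervals of definition) are uniquely determined, and each
`φᵢ` is injective, i.e. a nondecreasing homeomorphism. -/
theorem stmt4 (ℓ ℓ' : ℝ) (hℓ : 0 < ℓ) (hℓ' : 0 < ℓ')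
    (φ : ℝ → ℝ) (hφ : IsMFun ℓ ℓ' φ)
    (n : ℕ) (hn : 1 ≤ n) (ℓ's : Fin n → ℝ) (hpos : ∀ i, 0 < ℓ's i)
    (hsum : (∑ i, ℓ's i) = ℓ') :
    (∃ ℓs : Fin n → ℝ, ∃ φs : Fin n → ℝ → ℝ,
      (∀ i, 0 < ℓs i) ∧ (∑ i, ℓs i) = ℓ ∧
      (∀ i, IsMFun (ℓs i) (ℓ's i) (φs i)) ∧
      IsTensorDecomp φ ℓs ℓ's φs) ∧
    (InjOn φ (Icc 0 ℓ) →
      (∀ (ℓs₁ ℓs₂ : Fin n → ℝ) (φs₁ φs₂ : Fin n → ℝ → ℝ),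
        ((∀ i, 0 < ℓs₁ i) ∧ (∑ i, ℓs₁ i) = ℓ ∧ (∀ i, IsMFun (ℓs₁ i) (ℓ's i) (φs₁ i)) ∧
          IsTensorDecomp φ ℓs₁ ℓ's φs₁) →
        ((∀ i, 0 < ℓs₂ i) ∧ (∑ i, ℓs₂ i) = ℓ ∧ (∀ i, IsMFun (ℓs₂ i) (ℓ's i) (φs₂ i)) ∧
          IsTensorDecomp φ ℓs₂ ℓ's φs₂) →
        ℓs₁ = ℓs₂ ∧ ∀ i, EqOn (φs₁ i) (φs₂ i) (Icc 0 (ℓs₁ i))) ∧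
      (∀ (ℓs : Fin n → ℝ) (φs : Fin n → ℝ → ℝ),
        ((∀ i, 0 < ℓs i) ∧ (∑ i, ℓs i) = ℓ ∧ (∀ i, IsMFun (ℓs i) (ℓ's i) (φs i)) ∧
          IsTensorDecomp φ ℓs ℓ's φs) →
        ∀ i, InjOn (φs i) (Icc 0 (ℓs i)))) := by
  constructor
  · have hmono := psum_mono_aux ℓ's hpos
    have hf0 := mfun_zero hℓ hℓ' hφ
    have hf1 := mfun_end hℓ hℓ' hφ
    obtain ⟨hc, hm, hi⟩ := hφ
    have key : ∀ k : ℕ, ∃ x ∈ Icc 0 ℓ, k ≤ n → (φ x = psum ℓ's k ∧ (k = 0 → x = 0) ∧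
        (k = n → x = ℓ)) := by
      intro k
      by_cases hk : k ≤ n
      · by_cases hk0 : k = 0
        · subst hk0
          exact ⟨0, ⟨le_rfl, hℓ.le⟩, fun _ => ⟨by rw [hf0, psum_zero_aux], fun _ => rfl,
            fun h => by omega⟩⟩
        · by_cases hkn : k = n
          · subst hkn
            exact ⟨ℓ, ⟨hℓ.le, le_rfl⟩, fun _ => ⟨by rw [hf1, psum_full_aux, hsum],
              fun h => absurd h hk0, fun _ => rfl⟩⟩
          · have : psum ℓ's k ∈ φ '' Icc 0 ℓ := by
              rw [hi]
              refine ⟨?_, ?_⟩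
              · rw [← psum_zero_aux ℓ's]; exact hmono (Nat.zero_le k)
              · rw [← hsum, ← psum_full_aux]; exact hmono hk
            obtain ⟨x, hx, hx2⟩ := this
            exact ⟨x, hx, fun _ => ⟨hx2, fun h => absurd h hk0, fun h => absurd h hkn⟩⟩
      · exact ⟨0, ⟨le_rfl, hℓ.le⟩, fun h => absurd h hk⟩
    choose c hcI hcP using key
    have hc0 : c 0 = 0 := (hcP 0 (Nat.zero_le n)).2.1 rfl
    have hcn : c n = ℓ := (hcP n le_rfl).2.2 rfl
    have hlt : ∀ i : Fin n, c i < c (i + 1) := by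
      intro i
      by_contra hcon
      push Not at hcon
      have h1 := hm (hcI _) (hcI _) hcon
      rw [(hcP i i.2.le).1, (hcP (i+1) i.2).1, psum_succ_aux] at h1
      linarith [hpos i]
    have hps : ∀ k ≤ n, psum (fun i : Fin n => c (i + 1) - c i) k = c k := by
      intro k
      induction k with
      | zero => intro _; rw [psum_zero_aux, hc0]
      | succ k ih =>
        intro hk
        have h1 := psum_succ_aux (fun i : Fin n => c (i + 1) - c i) ⟨k, hk⟩
        simp only at h1
        rw [h1, ih (by omega)]
        ring
    refine ⟨fun i => c (i + 1) - c i, fun i t => φ (t + c i) - psum ℓ's i,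
      fun i => sub_pos.2 (hlt i), ?_, ?_, ?_⟩
    · rw [← psum_full_aux, hps n le_rfl, hcn]
    · intro i
      have hmaps : ∀ t ∈ Icc 0 (c (i + 1) - c i), t + c i ∈ Icc 0 ℓ := fun t ht =>
        ⟨by linarith [ht.1, (hcI i).1], by linarith [ht.2, (hcI (i + 1)).2]⟩
      have hC : ContinuousOn (fun t => φ (t + c i) - psum ℓ's i) (Icc 0 (c (i + 1) - c i)) :=
        (hc.comp (by fun_prop) hmaps).sub continuousOn_const
      have hM : MonotoneOn (fun t => φ (t + c i) - psum ℓ's i) (Icc 0 (c (i + 1) - c i)) := by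
        intro s hs t ht hst
        have := hm (hmaps s hs) (hmaps t ht) (by linarith)
        simp only
        linarith
      have e0 : φ (0 + c i) - psum ℓ's i = 0 := by
        rw [zero_add, (hcP i i.2.le).1, sub_self]
      have e1 : φ (c (i + 1) - c i + c i) - psum ℓ's i = ℓ's i := by
        rw [sub_add_cancel, (hcP (i + 1) i.2).1, psum_succ_aux]; ring
      have hle : 0 ≤ c (i + 1) - c i := (sub_pos.2 (hlt i)).le
      refine ⟨hC, hM, Subset.antisymm ?_ ?_⟩
      · rintro _ ⟨t, ht, rfl⟩
        have a := hM ⟨le_rfl, hle⟩ ht ht.1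
        have b := hM ht ⟨hle, le_rfl⟩ ht.2
        simp only [e0, e1] at a b
        exact ⟨a, b⟩
      · have := intermediate_value_Icc hle hC
        simp only [e0, e1] at this
        exact this
    · intro i t _
      simp only [hps i i.2.le, sub_add_cancel]
  · intro hinj
    refine ⟨?_, ?_⟩
    · rintro a b f g ⟨a1, a2, a3, a4⟩ ⟨b1, b2, b3, b4⟩
      have hp : ∀ k ≤ n, psum a k = psum b k := by
        intro k hk
        have h1 := decomp_point hℓ hℓ' hφ hpos hsum a1 a2 a3 a4 k hk
        have h2 := decomp_point hℓ hℓ' hφ hpos hsum b1 b2 b3 b4 k hk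
        exact hinj h1.1 h2.1 (h1.2.trans h2.2.symm)
      have hab : a = b := by
        funext i
        have h1 := psum_succ_aux a i
        have h2 := psum_succ_aux b i
        rw [hp _ i.2, hp _ i.2.le] at h1
        linarith
      subst hab
      refine ⟨rfl, fun i t ht => ?_⟩
      have hmem : t + psum a i ∈ Icc (psum a i) (psum a (i + 1)) := by
        rw [psum_succ_aux]
        exact ⟨by linarith [ht.1], by linarith [ht.2]⟩
      have h1 := a4 i _ hmem
      have h2 := b4 i _ hmem
      rw [add_sub_cancel_right] at h1 h2
      linarith
    · rintro a f ⟨a1, a2, a3, a4⟩ i s hs t ht hst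
      have hmem : ∀ t ∈ Icc 0 (a i), t + psum a i ∈ Icc (psum a i) (psum a (i + 1)) := by
        intro t ht
        rw [psum_succ_aux]
        exact ⟨by linarith [ht.1], by linarith [ht.2]⟩
      have p0 := (decomp_point hℓ hℓ' hφ hpos hsum a1 a2 a3 a4 i i.2.le).1
      have p1 := (decomp_point hℓ hℓ' hφ hpos hsum a1 a2 a3 a4 (i + 1) i.2).1
      have hs' := hmem s hs
      have ht' := hmem t ht
      have h1 := a4 i _ hs'
      have h2 := a4 i _ ht'
      rw [add_sub_cancel_right] at h1 h2
      have := hinj ⟨p0.1.trans hs'.1, hs'.2.trans p1.2⟩ ⟨p0.1.trans ht'.1, ht'.2.trans p1.2⟩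
        (by rw [h1, h2, hst])
      linarith
end

section
/- Let ℓ > 0 and let u, v ∈ M(1, ℓ), i.e., u and v are continuous nondecreasing surjective maps from [0,1] to [0,ℓ]. Then there exist φ_u, φ_v ∈ M(1,1) such that u ∘ φ_u = v ∘ φ_v. -/
theorem aux_greatest (U V : ℝ → ℝ) (hU : Continuous U) (hV : Continuous V)
    (mU : Monotone U) (mV : Monotone V) (h0 : U 0 = V 0) (h1 : U 1 = V 1)
    (t : ℝ) (ht : t ∈ Set.Icc (0:ℝ) 1) :
    ∃ b, IsGreatest {x | x ∈ Set.Icc (0:ℝ) 1 ∧ 2*t - x ∈ Set.Icc (0:ℝ) 1 ∧ U x ≤ V (2*t-x)} b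
      ∧ U b = V (2*t-b) := by
  obtain ⟨ht0, ht1⟩ := ht
  have hcl : IsClosed {x | x ∈ Set.Icc (0:ℝ) 1 ∧ 2*t - x ∈ Set.Icc (0:ℝ) 1 ∧ U x ≤ V (2*t-x)} := by
    refine IsClosed.and isClosed_Icc (IsClosed.and ?_ ?_)
    · exact isClosed_Icc.preimage (f := fun x : ℝ => 2*t-x) (by fun_prop)
    · exact isClosed_le hU (by fun_prop)
  have hc : IsCompact {x | x ∈ Set.Icc (0:ℝ) 1 ∧ 2*t - x ∈ Set.Icc (0:ℝ) 1 ∧ U x ≤ V (2*t-x)} :=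
    isCompact_Icc.of_isClosed_subset hcl (fun x hx => hx.1)
  have hne : {x | x ∈ Set.Icc (0:ℝ) 1 ∧ 2*t - x ∈ Set.Icc (0:ℝ) 1 ∧ U x ≤ V (2*t-x)}.Nonempty := by
    rcases le_total (2*t) 1 with h | h
    · refine ⟨0, ⟨le_rfl, by norm_num⟩, ⟨by linarith, by linarith⟩, ?_⟩
      rw [h0]; exact mV (by linarith)
    · refine ⟨2*t-1, ⟨by linarith, by linarith⟩, ⟨by linarith, by linarith⟩, ?_⟩
      have : 2*t-(2*t-1) = 1 := by ring
      rw [this, ← h1]; exact mU (by linarith)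
  obtain ⟨b, hb⟩ := hc.exists_isGreatest hne
  refine ⟨b, hb, ?_⟩
  obtain ⟨⟨⟨hb0, hb1⟩, ⟨hc0, hc1⟩, hle⟩, hmax⟩ := hb
  have key : ∃ c, b ≤ c ∧ c ≤ 1 ∧ c ≤ 2*t ∧ V (2*t-c) ≤ U c := by
    rcases le_total (2*t) 1 with h | h
    · refine ⟨2*t, by linarith, h, le_rfl, ?_⟩
      rw [sub_self, ← h0]; exact mU (by linarith)
    · refine ⟨1, hb1, le_rfl, h, ?_⟩
      rw [h1]; exact mV (by linarith)
  obtain ⟨c, hbc, hc1', hct, hcc⟩ := key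
  obtain ⟨z, ⟨hz1, hz2⟩, hz⟩ := intermediate_value_Icc (f := fun x => U x - V (2*t-x)) hbc
    (by fun_prop) (show (0:ℝ) ∈ _ from ⟨by simp; linarith, by simp; linarith⟩)
  simp only at hz
  have : z ≤ b := hmax ⟨⟨by linarith, by linarith⟩, ⟨by linarith, by linarith⟩, by linarith⟩
  have : z = b := le_antisymm this hz1
  subst this
  linarith

/-- Let `ℓ > 0` and let `u, v ∈ M(1, ℓ)`, i.e. continuous nondecreasing surjective maps from
`[0,1]` to `[0,ℓ]`. Then there exist `φ_u, φ_v ∈ M(1,1)` with `u ∘ φ_u = v ∘ φ_v`. -/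
theorem stmt5 (ℓ : ℝ) (hℓ : 0 < ℓ)
    (u v : C(Set.Icc (0:ℝ) 1, Set.Icc (0:ℝ) ℓ))
    (hum : Monotone u) (hus : Function.Surjective u)
    (hvm : Monotone v) (hvs : Function.Surjective v) :
    ∃ φu φv : C(Set.Icc (0:ℝ) 1, Set.Icc (0:ℝ) 1),
      Monotone φu ∧ Function.Surjective φu ∧
      Monotone φv ∧ Function.Surjective φv ∧
      u.comp φu = v.comp φv := by
  have ends : ∀ w : C(Set.Icc (0:ℝ) 1, Set.Icc (0:ℝ) ℓ), Monotone w → Function.Surjective w →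
      (w 0 : ℝ) = 0 ∧ (w 1 : ℝ) = ℓ := by
    intro w hm hs
    constructor
    · obtain ⟨x, hx⟩ := hs ⟨0, le_rfl, hℓ.le⟩
      have h : w 0 ≤ w x := hm x.2.1
      rw [hx] at h
      exact le_antisymm h (w 0).2.1
    · obtain ⟨x, hx⟩ := hs ⟨ℓ, hℓ.le, le_rfl⟩
      have h : w x ≤ w 1 := hm x.2.2
      rw [hx] at h
      exact le_antisymm (w 1).2.2 h
  let E : C(Set.Icc (0:ℝ) 1, Set.Icc (0:ℝ) ℓ) → ℝ → ℝ := fun w x =>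
    (w (Set.projIcc 0 1 zero_le_one x) : ℝ)
  have Ec : ∀ w, Continuous (E w) := fun w =>
    continuous_subtype_val.comp (w.continuous.comp continuous_projIcc)
  have Em : ∀ w : C(Set.Icc (0:ℝ) 1, Set.Icc (0:ℝ) ℓ), Monotone w → Monotone (E w) :=
    fun w hw x y hxy => hw (Set.monotone_projIcc _ hxy)
  have Ee : ∀ w (x : Set.Icc (0:ℝ) 1), E w x = w x := fun w x => by simp [E]
  have E0 : E u 0 = E v 0 := by
    have a := Ee u 0; have b := Ee v 0
    rw [(ends u hum hus).1] at a; rw [(ends v hvm hvs).1] at b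
    exact a.trans b.symm
  have E1 : E u 1 = E v 1 := by
    have a := Ee u 1; have b := Ee v 1
    rw [(ends u hum hus).2] at a; rw [(ends v hvm hvs).2] at b
    exact a.trans b.symm
  have mU := Em u hum
  have mV := Em v hvm
  choose b hb hbe using fun t : Set.Icc (0:ℝ) 1 =>
    aux_greatest (E u) (E v) (Ec u) (Ec v) mU mV E0 E1 t t.2
  have B1 : ∀ s t : Set.Icc (0:ℝ) 1, s ≤ t → b s ≤ b t := by
    intro s t hst
    have hst' : (s:ℝ) ≤ t := hst
    obtain ⟨⟨⟨p0, p1⟩, ⟨q0, q1⟩, hle⟩, -⟩ := hb s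
    obtain ⟨⟨⟨p0', p1'⟩, ⟨q0', q1'⟩, hle'⟩, hm⟩ := hb t
    by_cases h : 2*(t:ℝ) - b s ≤ 1
    · exact hm ⟨⟨p0, p1⟩, ⟨by linarith, h⟩, hle.trans (mV (by linarith))⟩
    · linarith
  have B2 : ∀ s t : Set.Icc (0:ℝ) 1, s ≤ t → 2*(s:ℝ) - b s ≤ 2*(t:ℝ) - b t := by
    intro s t hst
    have hst' : (s:ℝ) ≤ t := hst
    obtain ⟨⟨⟨p0, p1⟩, ⟨q0, q1⟩, hle⟩, hm⟩ := hb s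
    obtain ⟨⟨⟨p0', p1'⟩, ⟨q0', q1'⟩, hle'⟩, -⟩ := hb t
    by_contra! h
    have : b t - 2*(t-s) ≤ b s := by
      refine hm ⟨⟨by linarith, by linarith⟩, ⟨by linarith, by linarith⟩, ?_⟩
      have e : 2*(s:ℝ) - (b t - 2*(t-s)) = 2*t - b t := by ring
      rw [e]
      exact (mU (by linarith)).trans hle'
    linarith
  have bc : Continuous b := by
    have : LipschitzWith 2 b := by
      refine LipschitzWith.of_le_add_mul 2 fun s t => ?_
      have hd : (s:ℝ) - t ≤ dist s t := le_abs_self _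
      have hd0 : 0 ≤ dist s t := dist_nonneg
      push_cast
      rcases le_total s t with h | h
      · have := B1 s t h
        linarith
      · have := B2 t s h
        linarith
    exact this.continuous
  have surj : ∀ f : C(Set.Icc (0:ℝ) 1, Set.Icc (0:ℝ) 1), f 0 = 0 → f 1 = 1 →
      Function.Surjective f := by
    intro f h0 h1 y
    have : y ∈ Set.Icc (f 0) (f 1) := by rw [h0, h1]; exact ⟨y.2.1, y.2.2⟩
    obtain ⟨x, -, hx⟩ := intermediate_value_Icc (show (0 : Set.Icc (0:ℝ) 1) ≤ 1 from zero_le_one)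
      f.continuous.continuousOn this
    exact ⟨x, hx⟩
  have b0 : b 0 = 0 := by
    obtain ⟨⟨⟨p0, p1⟩, ⟨q0, q1⟩, hle⟩, hm⟩ := hb 0
    simp at q0
    linarith
  have b1 : b 1 = 1 := by
    obtain ⟨⟨⟨p0, p1⟩, ⟨q0, q1⟩, hle⟩, hm⟩ := hb 1
    simp at q1
    linarith
  refine ⟨⟨fun t => ⟨b t, (hb t).1.1⟩, by fun_prop⟩, ⟨fun t => ⟨2*t - b t, (hb t).1.2.1⟩, by fun_prop⟩,
    fun s t h => B1 s t h, surj _ ?_ ?_, fun s t h => B2 s t h, surj _ ?_ ?_, ?_⟩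
  · exact Subtype.ext b0
  · exact Subtype.ext b1
  · apply Subtype.ext; simp [b0]
  · apply Subtype.ext; simp [b1]; norm_num
  · ext t
    have h := hbe t
    have h1 := Ee u ⟨b t, (hb t).1.1⟩
    have h2 := Ee v ⟨2*t - b t, (hb t).1.2.1⟩
    exact h1.symm.trans (h.trans h2)
end

section
/- Let M be the category whose objects are the real numbers ℓ > 0 and whose morphisms from ℓ to ℓ' are the continuous nondecreasing surjective maps [0,ℓ] → [0,ℓ'], with composition given by composition of functions. Then the inclusion functor into M^op of the full subcategory of M^op spanned by the single object 1 is a final functor; equivalently, for every ℓ > 0 the comma category of objects of this subcategory under ℓ is nonempty and connected, i.e., M(1, ℓ) is nonempty and any two elements u, v ∈ M(1, ℓ) are connected by a finite zigzag of precompositions by elements of M(1,1). -/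
/-- Composition of morphisms of the category `M`. -/
def MSp.comp {ℓ₁ ℓ₂ ℓ₃ : ℝ} (g : MSp ℓ₂ ℓ₃) (f : MSp ℓ₁ ℓ₂) : MSp ℓ₁ ℓ₃ :=
  ⟨g.1.comp f.1, by
    constructor
    · rw [ContinuousMap.coe_comp]
      exact g.2.1.comp f.2.1
    · rw [ContinuousMap.coe_comp]
      exact g.2.2.comp f.2.2⟩

/-- The full subcategory of `M^op` spanned by the object `1` is final in `M^op`; equivalently,
for every `ℓ > 0`, the relevant comma category is nonempty and connected, i.e. `M(1, ℓ)` is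
nonempty and any two elements `u, v ∈ M(1, ℓ)` are connected by a finite zigzag of
precompositions by elements of `M(1,1)` (i.e. they are related by the equivalence relation
generated by `u ~ u ∘ φ` for `φ ∈ M(1,1)`). -/
theorem stmt6 (ℓ : ℝ) (hℓ : 0 < ℓ) :
    Nonempty (MSp 1 ℓ) ∧
      ∀ u v : MSp 1 ℓ,
        Relation.EqvGen (fun u v : MSp 1 ℓ => ∃ φ : MSp 1 1, v = u.comp φ) u v := by
  have key : ∀ v : MSp 1 ℓ, ∀ u : MSp 1 ℓ, (∀ t, (u.1 t : ℝ) = ℓ * t) →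
      ∃ φ : MSp 1 1, v = u.comp φ := by
    intro v u hu
    refine ⟨⟨⟨fun t => ⟨(v.1 t : ℝ) / ℓ, div_nonneg (v.1 t).2.1 hℓ.le,
      (div_le_one hℓ).2 (v.1 t).2.2⟩, ?_⟩, ?_, ?_⟩, ?_⟩
    · have := v.1.continuous
      fun_prop
    · intro a b hab
      exact Subtype.mk_le_mk.2 (div_le_div_of_nonneg_right (v.2.1 hab) hℓ.le)
    · intro y
      obtain ⟨t, ht⟩ := v.2.2 (u.1 y)
      refine ⟨t, Subtype.ext ?_⟩
      change (v.1 t : ℝ) / ℓ = y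
      rw [ht, hu]
      field_simp
    · apply Subtype.ext
      apply ContinuousMap.ext
      intro t
      apply Subtype.ext
      change (v.1 t : ℝ) = (u.1 _ : ℝ)
      rw [hu]
      change (v.1 t : ℝ) = ℓ * ((v.1 t : ℝ) / ℓ)
      field_simp
  have ex : ∃ u : MSp 1 ℓ, ∀ t, (u.1 t : ℝ) = ℓ * t := by
    refine ⟨⟨⟨fun t => ⟨ℓ * t, mul_nonneg hℓ.le t.2.1, mul_le_of_le_one_right hℓ.le t.2.2⟩, ?_⟩,
      ?_, ?_⟩, fun t => rfl⟩
    · fun_prop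
    · intro a b hab
      exact Subtype.mk_le_mk.2 (mul_le_mul_of_nonneg_left hab hℓ.le)
    · intro y
      refine ⟨⟨(y : ℝ) / ℓ, div_nonneg y.2.1 hℓ.le, (div_le_one hℓ).2 y.2.2⟩, Subtype.ext ?_⟩
      change ℓ * ((y : ℝ) / ℓ) = y
      field_simp
  obtain ⟨w, hw⟩ := ex
  refine ⟨⟨w⟩, fun u v => ?_⟩
  exact .trans _ w _ (.symm _ _ (.rel _ _ (key u w hw))) (.rel _ _ (key v w hw))
end

section
/- Let X be a Hausdorff topological space, let L > 0, and let γ : [0, L] → X be a continuous map which is not constant on any nondegenerate subinterval of [0, L] (i.e., γ is a regular path). Let ℓ > 0 and let η₁, η₂ : [0, ℓ] → [0, L] be continuous nondecreasing surjective maps such that γ ∘ η₁ = γ ∘ η₂. Then η₁ = η₂. -/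
theorem stmt7_aux {X : Type*} [TopologicalSpace X] [T2Space X]
    (L : ℝ) (hL : 0 < L) (γ : C(Set.Icc (0:ℝ) L, X))
    (hreg : ∀ a b : Set.Icc (0:ℝ) L, a < b →
      ¬ (∀ s ∈ Set.Icc a b, ∀ t ∈ Set.Icc a b, γ s = γ t))
    (ℓ : ℝ) (hℓ : 0 < ℓ)
    (η₁ η₂ : C(Set.Icc (0:ℝ) ℓ, Set.Icc (0:ℝ) L))
    (h₁m : Monotone η₁) (h₁s : Function.Surjective η₁)
    (h₂m : Monotone η₂)
    (hcomp : ∀ t, γ (η₁ t) = γ (η₂ t)) (t0 : Set.Icc (0:ℝ) ℓ) : η₂ t0 ≤ η₁ t0 := by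
  by_contra! hlt
  obtain ⟨b, ⟨hb0, hb⟩, hbmin⟩ : ∃ b, IsLeast {t : Set.Icc (0:ℝ) ℓ | t0 ≤ t ∧ η₂ t ≤ η₁ t} b := by
    apply IsCompact.exists_isLeast
    · apply IsClosed.isCompact
      exact (isClosed_le continuous_const continuous_id).inter
        (isClosed_le (continuous_subtype_val.comp η₂.continuous)
          (continuous_subtype_val.comp η₁.continuous))
    · refine ⟨⟨ℓ, hℓ.le, le_rfl⟩, t0.2.2, ?_⟩
      obtain ⟨t, ht⟩ := h₁s ⟨L, hL.le, le_rfl⟩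
      have h1 : η₁ t ≤ η₁ ⟨ℓ, hℓ.le, le_rfl⟩ := h₁m t.2.2
      rw [ht] at h1
      exact le_trans (show _ ≤ (⟨L, hL.le, le_rfl⟩ : Set.Icc (0:ℝ) L) from (η₂ _).2.2) h1
  have hAB : η₁ t0 < η₁ b := hlt.trans_le ((h₂m hb0).trans hb)
  have key : ∀ s ∈ Set.Icc (η₁ t0) (η₁ b), γ s = γ (η₁ b) := by
    intro s hs
    obtain ⟨u, ⟨⟨hsu, huB⟩, hu⟩, humax⟩ :
        ∃ u, IsGreatest {u : Set.Icc (0:ℝ) L | (s ≤ u ∧ u ≤ η₁ b) ∧ γ u = γ s} u := by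
      apply IsCompact.exists_isGreatest
      · apply IsClosed.isCompact
        exact ((isClosed_le continuous_const continuous_id).inter
          (isClosed_le continuous_id continuous_const)).inter
          (isClosed_eq γ.continuous continuous_const)
      · exact ⟨s, ⟨le_rfl, hs.2⟩, rfl⟩
    rcases huB.eq_or_lt with h | h
    · rw [← hu, h]
    exfalso
    obtain ⟨t, ht0, htu⟩ : ∃ t, t0 ≤ t ∧ η₁ t = u := by
      obtain ⟨t, ht⟩ := h₁s u
      rcases le_total t0 t with h' | h'
      · exact ⟨t, h', ht⟩
      · exact ⟨t0, le_rfl, le_antisymm (hs.1.trans hsu) (ht ▸ h₁m h')⟩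
    have htb : t < b := by
      by_contra! h'
      exact absurd (h₁m h') (by rw [htu]; exact not_le.2 h)
    have h12 : u < η₂ t := by
      by_contra! h'
      exact absurd (hbmin ⟨ht0, h'.trans htu.ge⟩) (not_le.2 htb)
    have := humax (show η₂ t ∈ _ from ⟨⟨hsu.trans h12.le, (h₂m htb.le).trans hb⟩,
      by rw [← hcomp, htu, hu]⟩)
    exact absurd this (not_le.2 h12)
  exact hreg _ _ hAB fun s hs t ht => (key s hs).trans (key t ht).symm

/-- Let `X` be Hausdorff, `L > 0`, and `γ : [0, L] → X` a continuous map which is regular,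
i.e. not constant on any nondegenerate subinterval of `[0, L]`. If `η₁, η₂ : [0, ℓ] → [0, L]`
are continuous nondecreasing surjective maps with `γ ∘ η₁ = γ ∘ η₂`, then `η₁ = η₂`. -/
theorem stmt7 {X : Type*} [TopologicalSpace X] [T2Space X]
    (L : ℝ) (hL : 0 < L) (γ : C(Set.Icc (0:ℝ) L, X))
    (hreg : ∀ a b : Set.Icc (0:ℝ) L, a < b →
      ¬ (∀ s ∈ Set.Icc a b, ∀ t ∈ Set.Icc a b, γ s = γ t))
    (ℓ : ℝ) (hℓ : 0 < ℓ)
    (η₁ η₂ : C(Set.Icc (0:ℝ) ℓ, Set.Icc (0:ℝ) L))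
    (h₁m : Monotone η₁) (h₁s : Function.Surjective η₁)
    (h₂m : Monotone η₂) (h₂s : Function.Surjective η₂)
    (hcomp : γ.comp η₁ = γ.comp η₂) :
    η₁ = η₂ := by
  have hc : ∀ t, γ (η₁ t) = γ (η₂ t) := fun t => DFunLike.congr_fun hcomp t
  ext1 t
  exact le_antisymm
    (stmt7_aux L hL γ hreg ℓ hℓ η₂ η₁ h₂m h₂s h₁m (fun t => (hc t).symm) t)
    (stmt7_aux L hL γ hreg ℓ hℓ η₁ η₂ h₁m h₁s h₂m hc t)
end

section
/- Let X be a topological space and let P be a set of continuous maps [0,1] → X such that: (i) for every γ ∈ P and every φ ∈ M(1,1), the composite γ ∘ φ belongs to P; (ii) for all γ₁, γ₂ ∈ P with γ₁(1) = γ₂(0), the normalized composition γ₁ *_N γ₂ belongs to P. Define P̂ = { γ ∈ C([0,1], X) : there exists φ ∈ M(1,1) with γ ∘ φ ∈ P }. Then P ⊆ P̂, and P̂ again satisfies properties (i) and (ii): it is closed under precomposition by elements of M(1,1) and under normalized composition of composable pairs. -/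
open unitInterval

/-- The normalized composition `γ₁ *_N γ₂` of two continuous maps `γ₁ γ₂ : [0,1] → X` with
`γ₁ 1 = γ₂ 0`, given by `t ↦ γ₁ (2t)` on `[0, 1/2]` and `t ↦ γ₂ (2t − 1)` on `[1/2, 1]`. -/
noncomputable def normComp {X : Type*} [TopologicalSpace X] (γ₁ γ₂ : C(unitInterval, X))
    (h : γ₁ 1 = γ₂ 0) : C(unitInterval, X) :=
  ((Path.mk γ₁ rfl rfl : Path (γ₁ 0) (γ₁ 1)).trans
    ((Path.mk γ₂ rfl rfl : Path (γ₂ 0) (γ₂ 1)).cast h rfl)).toContinuousMap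

/-- `P̂` : the set of continuous maps `γ : [0,1] → X` admitting a reparametrization
`φ ∈ M(1,1)` with `γ ∘ φ ∈ P`. -/
def satur {X : Type*} [TopologicalSpace X] (P : Set C(unitInterval, X)) :
    Set C(unitInterval, X) :=
  {γ | ∃ φ : C(unitInterval, unitInterval),
    Monotone φ ∧ Function.Surjective φ ∧ γ.comp φ ∈ P}

theorem aux_end {φ : C(unitInterval, unitInterval)} (hm : Monotone φ)
    (hs : Function.Surjective φ) : φ 0 = 0 ∧ φ 1 = 1 := by
  constructor
  · obtain ⟨x, hx⟩ := hs 0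
    exact le_antisymm ((hm (show 0 ≤ x from x.2.1)).trans hx.le) (φ 0).2.1
  · obtain ⟨x, hx⟩ := hs 1
    exact le_antisymm (φ 1).2.2 (hx.ge.trans (hm (show x ≤ 1 from x.2.2)))

theorem aux_surj {φ : C(unitInterval, unitInterval)} (h0 : φ 0 = 0) (h1 : φ 1 = 1) :
    Function.Surjective φ := by
  intro y
  have := intermediate_value_univ (0 : unitInterval) 1 φ.continuous
  rw [h0, h1] at this
  exact this ⟨y.2.1, y.2.2⟩

/-- extension to the line -/
noncomputable def auxExt (φ : C(unitInterval, unitInterval)) (x : ℝ) : ℝ :=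
  φ (Set.projIcc 0 1 zero_le_one x) + (x - (Set.projIcc (0:ℝ) 1 zero_le_one x : ℝ))

theorem auxExt_cont (φ : C(unitInterval, unitInterval)) : Continuous (auxExt φ) := by
  unfold auxExt
  have : Continuous (Set.projIcc (0:ℝ) 1 zero_le_one) := continuous_projIcc
  fun_prop

theorem auxExt_mono {φ : C(unitInterval, unitInterval)} (hm : Monotone φ) :
    Monotone (auxExt φ) := by
  intro x y hxy
  unfold auxExt
  have h1 : ((φ (Set.projIcc 0 1 zero_le_one x) : unitInterval) : ℝ) ≤
      φ (Set.projIcc 0 1 zero_le_one y) := hm (Set.monotone_projIcc _ hxy)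
  have h2 : x - (Set.projIcc (0:ℝ) 1 zero_le_one x : ℝ) ≤
      y - (Set.projIcc (0:ℝ) 1 zero_le_one y : ℝ) := by
    simp only [Set.coe_projIcc]
    grind
  linarith

theorem auxExt_mem (φ : C(unitInterval, unitInterval)) (x : unitInterval) :
    auxExt φ x = φ x := by
  simp [auxExt]

theorem auxExt_lt {φ : C(unitInterval, unitInterval)} (h0 : φ 0 = 0) {x : ℝ} (hx : x ≤ 0) :
    auxExt φ x = x := by
  have : Set.projIcc (0:ℝ) 1 zero_le_one x = 0 := Set.projIcc_of_le_left _ hx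
  simp [auxExt, this, h0]

theorem auxExt_gt {φ : C(unitInterval, unitInterval)} (h1 : φ 1 = 1) {x : ℝ} (hx : 1 ≤ x) :
    auxExt φ x = x := by
  have : Set.projIcc (0:ℝ) 1 zero_le_one x = 1 := Set.projIcc_of_right_le _ hx
  simp [auxExt, this, h1]

theorem aux_line (f g : ℝ → ℝ) (hf : Continuous f) (hg : Continuous g) (hfm : Monotone f)
    (hgm : Monotone g) (hf0 : ∀ x ≤ 0, f x = x) (hf1 : ∀ x, 1 ≤ x → f x = x)
    (hg0 : ∀ x ≤ 0, g x = x) (hg1 : ∀ x, 1 ≤ x → g x = x) :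
    ∃ s : ℝ → ℝ, Monotone s ∧ Monotone (fun c => c - s c) ∧ ∀ c, f (s c) = g (c - s c) := by
  let S : ℝ → Set ℝ := fun c => {x | f x ≤ g (c - x)}
  have hne : ∀ c, (S c).Nonempty := by
    intro c
    refine ⟨-|c| - 1, ?_⟩
    have := neg_abs_le c
    have h2 := abs_nonneg c
    simp only [S, Set.mem_ofPred_eq]
    rw [hf0 _ (by linarith), hg1 _ (by linarith)]
    linarith
  have hbd : ∀ c, BddAbove (S c) := by
    intro c
    refine ⟨|c| + 2, fun x hx => ?_⟩
    by_contra! hlt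
    have := le_abs_self c
    have h2 := abs_nonneg c
    simp only [S, Set.mem_ofPred_eq] at hx
    rw [hf1 _ (by linarith), hg0 _ (by linarith)] at hx
    linarith
  have hcl : ∀ c, IsClosed (S c) := fun c => isClosed_le hf (by fun_prop)
  have hmem : ∀ c, sSup (S c) ∈ S c := fun c => (hcl c).csSup_mem (hne c) (hbd c)
  refine ⟨fun c => sSup (S c), ?_, ?_, ?_⟩
  · intro c d hcd
    refine csSup_le_csSup (hbd d) (hne c) fun x hx => ?_
    exact le_trans hx (hgm (by linarith))
  · intro c d hcd
    have : sSup (S d) - (d - c) ∈ S c := by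
      have h := hmem d
      simp only [S, Set.mem_ofPred_eq] at h ⊢
      refine (hfm (by linarith)).trans (h.trans (hgm (by linarith)))
    have := le_csSup (hbd c) this
    simp only
    linarith
  · intro c
    refine le_antisymm (hmem c) ?_
    have h : ∀ x ∈ Set.Ioi (sSup (S c)), g (c - x) ≤ f x := by
      intro x hx
      by_contra! hlt
      exact absurd (le_csSup (hbd c) (show x ∈ S c from hlt.le)) (not_le.2 hx)
    have hc2 : IsClosed {x | g (c - x) ≤ f x} := isClosed_le (by fun_prop) hf
    have := closure_minimal h hc2
    rw [closure_Ioi] at this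
    exact this (Set.self_mem_Ici)

theorem aux_pull {φ ψ : C(unitInterval, unitInterval)} (hφ : Monotone φ)
    (hφs : Function.Surjective φ) (hψ : Monotone ψ) (hψs : Function.Surjective ψ) :
    ∃ α β : C(unitInterval, unitInterval), Monotone α ∧ Function.Surjective α ∧
      Monotone β ∧ Function.Surjective β ∧ φ.comp α = ψ.comp β := by
  obtain ⟨p0, p1⟩ := aux_end hφ hφs
  obtain ⟨q0, q1⟩ := aux_end hψ hψs
  have hf0 := fun x (hx : x ≤ 0) => auxExt_lt p0 hx
  have hf1 := fun x (hx : 1 ≤ x) => auxExt_gt p1 hx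
  have hg0 := fun x (hx : x ≤ 0) => auxExt_lt q0 hx
  have hg1 := fun x (hx : 1 ≤ x) => auxExt_gt q1 hx
  have hfm := auxExt_mono hφ
  have hgm := auxExt_mono hψ
  obtain ⟨s, hs, ht, hst⟩ := aux_line _ _ (auxExt_cont φ) (auxExt_cont ψ) hfm hgm
    hf0 hf1 hg0 hg1
  have hsc : Continuous s := by
    have : LipschitzWith 1 s := by
      refine LipschitzWith.of_le_add fun x y => ?_
      rw [Real.dist_eq]
      rcases le_total x y with h | h
      · have := hs h
        have := abs_nonneg (x - y)
        linarith
      · have := ht h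
        have := le_abs_self (x - y)
        simp only at *
        linarith
    exact this.continuous
  have key : ∀ c, 0 ≤ c → c ≤ 2 → (0 ≤ s c ∧ s c ≤ 1) ∧ (0 ≤ c - s c ∧ c - s c ≤ 1) := by
    intro c h0 h2
    have e := hst c
    have a1 := hf1 (s c)
    have a0 := hf0 (s c)
    have b1 := hg1 (c - s c)
    have b0 := hg0 (c - s c)
    have f0 := hf0 0 le_rfl
    have f1 := hf1 1 le_rfl
    have g0 := hg0 0 le_rfl
    have g1 := hg1 1 le_rfl
    refine ⟨⟨?_, ?_⟩, ?_, ?_⟩ <;> by_contra! hlt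
    · have := hgm (show 0 ≤ c - s c by linarith)
      linarith [a0 hlt.le]
    · have := hgm (show c - s c ≤ 1 by linarith)
      linarith [a1 hlt.le]
    · have := hfm (show 0 ≤ s c by linarith)
      linarith [b0 hlt.le]
    · have := hfm (show s c ≤ 1 by linarith)
      linarith [b1 hlt.le]
  have key' : ∀ u : unitInterval, _ := fun u =>
    key (2 * (u:ℝ)) (by linarith [u.2.1]) (by linarith [u.2.2])
  have k0 := key 0 le_rfl (by norm_num)
  have k1 := key 2 (by norm_num) le_rfl
  let α : C(unitInterval, unitInterval) := ⟨fun u => ⟨s (2 * u), (key' u).1⟩, by fun_prop⟩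
  let β : C(unitInterval, unitInterval) :=
    ⟨fun u => ⟨2 * u - s (2 * u), (key' u).2⟩, by fun_prop⟩
  refine ⟨α, β, ?_, aux_surj ?_ ?_, ?_, aux_surj ?_ ?_, ?_⟩
  · intro x y hxy
    have : (x:ℝ) ≤ y := hxy
    exact hs (show 2 * (x:ℝ) ≤ 2 * y by linarith)
  · apply Subtype.ext
    simp [α]
    linarith
  · apply Subtype.ext
    simp [α]
    linarith
  · intro x y hxy
    have : (x:ℝ) ≤ y := hxy
    exact ht (show 2 * (x:ℝ) ≤ 2 * y by linarith)
  · apply Subtype.ext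
    simp [β]
    linarith
  · apply Subtype.ext
    simp [β]
    linarith
  · ext u
    have h1 := auxExt_mem φ (α u)
    have h2 := auxExt_mem ψ (β u)
    have h3 := hst (2 * u)
    simp only [ContinuousMap.comp_apply]
    rw [← h1, ← h2]
    exact h3

theorem normComp_le {X : Type*} [TopologicalSpace X] (γ₁ γ₂ : C(unitInterval, X))
    (h : γ₁ 1 = γ₂ 0) (t : unitInterval) (ht : (t:ℝ) ≤ 1/2) (u : unitInterval)
    (hu : (u:ℝ) = 2 * t) : normComp γ₁ γ₂ h t = γ₁ u := by
  have : u = ⟨2 * t, (unitInterval.mul_pos_mem_iff zero_lt_two).2 ⟨t.2.1, ht⟩⟩ :=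
    Subtype.ext hu
  rw [this]
  change (Path.trans _ _) t = _
  rw [Path.trans_apply, dif_pos ht]
  rfl

theorem normComp_ge {X : Type*} [TopologicalSpace X] (γ₁ γ₂ : C(unitInterval, X))
    (h : γ₁ 1 = γ₂ 0) (t : unitInterval) (ht : 1/2 ≤ (t:ℝ)) (u : unitInterval)
    (hu : (u:ℝ) = 2 * t - 1) : normComp γ₁ γ₂ h t = γ₂ u := by
  rcases ht.eq_or_lt with e | ht
  · rw [normComp_le γ₁ γ₂ h t e.ge 1 (by rw [← e]; norm_num), h]
    congr 1
    apply Subtype.ext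
    rw [hu, ← e]; norm_num
  · have : u = ⟨2 * t - 1, unitInterval.two_mul_sub_one_mem_iff.2 ⟨ht.le, t.2.2⟩⟩ :=
      Subtype.ext hu
    rw [this]
    change (Path.trans _ _) t = _
    rw [Path.trans_apply, dif_neg (not_le.2 ht)]
    rfl

/-- If a set `P` of continuous maps `[0,1] → X` is closed under precomposition by elements of
`M(1,1)` and under normalized composition of composable pairs, then `P ⊆ P̂` and `P̂` again
satisfies these two closure properties. -/
theorem stmt12 {X : Type*} [TopologicalSpace X] (P : Set C(unitInterval, X))
    (hP1 : ∀ γ ∈ P, ∀ φ : C(unitInterval, unitInterval),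
      Monotone φ → Function.Surjective φ → γ.comp φ ∈ P)
    (hP2 : ∀ γ₁ ∈ P, ∀ γ₂ ∈ P, ∀ h : γ₁ 1 = γ₂ 0, normComp γ₁ γ₂ h ∈ P) :
    P ⊆ satur P ∧
    (∀ γ ∈ satur P, ∀ φ : C(unitInterval, unitInterval),
      Monotone φ → Function.Surjective φ → γ.comp φ ∈ satur P) ∧
    (∀ γ₁ ∈ satur P, ∀ γ₂ ∈ satur P, ∀ h : γ₁ 1 = γ₂ 0,
      normComp γ₁ γ₂ h ∈ satur P) := by
  refine ⟨fun γ hγ => ⟨ContinuousMap.id _, monotone_id, Function.surjective_id, by simpa⟩,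
    ?_, ?_⟩
  · rintro γ ⟨ψ, hψ, hψs, hγ⟩ φ hφ hφs
    obtain ⟨α, β, hα, hαs, hβ, hβs, e⟩ := aux_pull hφ hφs hψ hψs
    refine ⟨α, hα, hαs, ?_⟩
    rw [ContinuousMap.comp_assoc, e, ← ContinuousMap.comp_assoc]
    exact hP1 _ hγ β hβ hβs
  · rintro γ₁ ⟨φ, hφ, hφs, hγ₁⟩ γ₂ ⟨ψ, hψ, hψs, hγ₂⟩ h
    obtain ⟨p0, p1⟩ := aux_end hφ hφs
    obtain ⟨q0, q1⟩ := aux_end hψ hψs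
    have h' : (γ₁.comp φ) 1 = (γ₂.comp ψ) 0 := by simp [p1, q0, h]
    have hmem := hP2 _ hγ₁ _ hγ₂ h'
    let pr : ℝ → unitInterval := Set.projIcc (0:ℝ) 1 zero_le_one
    have hpr : Continuous pr := continuous_projIcc
    have hprm : Monotone pr := Set.monotone_projIcc _
    have pr0 : ∀ x ≤ 0, pr x = 0 := fun x hx => Set.projIcc_of_le_left _ hx
    have pr1 : ∀ x, 1 ≤ x → pr x = 1 := fun x hx => Set.projIcc_of_right_le _ hx
    have prm : ∀ x, 0 ≤ x → x ≤ 1 → (pr x : ℝ) = x := fun x h0 h1 => by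
      simp [pr, Set.coe_projIcc, h0, h1]
    let Φ : C(unitInterval, unitInterval) :=
      ⟨fun t => ⟨((φ (pr (2 * t)) : ℝ) + ψ (pr (2 * t - 1))) / 2, by
        have a := (φ (pr (2 * t))).2
        have b := (ψ (pr (2 * t - 1))).2
        exact ⟨by linarith [a.1, b.1], by linarith [a.2, b.2]⟩⟩, by fun_prop⟩
    have hΦ : ∀ t, (Φ t : ℝ) = ((φ (pr (2 * t)) : ℝ) + ψ (pr (2 * t - 1))) / 2 := fun t => rfl
    refine ⟨Φ, ?_, aux_surj ?_ ?_, ?_⟩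
    · intro x y hxy
      have hxy' : (x:ℝ) ≤ y := hxy
      have a : (φ (pr (2 * x)) : ℝ) ≤ φ (pr (2 * y)) := hφ (hprm (by linarith))
      have b : (ψ (pr (2 * x - 1)) : ℝ) ≤ ψ (pr (2 * y - 1)) := hψ (hprm (by linarith))
      change (Φ x : ℝ) ≤ Φ y
      rw [hΦ, hΦ]
      linarith
    · apply Subtype.ext
      rw [hΦ, pr0 _ (by simp), pr0 _ (by simp), p0, q0]
      simp
    · apply Subtype.ext
      rw [hΦ, pr1 _ (by simp), pr1 _ (by norm_num), p1, q1]
      simp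
    · convert hmem using 1
      ext t
      rw [ContinuousMap.comp_apply]
      rcases le_total (t:ℝ) (1/2) with ht | ht
      · have e := hΦ t
        rw [pr0 (2 * t - 1) (by linarith), q0] at e
        simp only [Set.Icc.coe_zero] at e
        rw [normComp_le _ _ h' t ht (pr (2 * t)) (prm _ (by linarith [t.2.1]) (by linarith)),
          normComp_le _ _ h (Φ t) (by linarith [(φ (pr (2 * t))).2.2]) (φ (pr (2 * t)))
            (by linarith)]
        rfl
      · have e := hΦ t
        rw [pr1 (2 * t) (by linarith), p1] at e
        simp only [Set.Icc.coe_one] at e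
        rw [normComp_ge _ _ h' t ht (pr (2 * t - 1))
            (prm _ (by linarith) (by linarith [t.2.2])),
          normComp_ge _ _ h (Φ t) (by linarith [(ψ (pr (2 * t - 1))).2.1])
            (ψ (pr (2 * t - 1))) (by linarith)]
        rfl
end
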